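/- The variance of an n-qubit independent quantum error with identical per-qubit density f(θ₀) is V = 2 - 2(4π ∫₀^π f(θ₀)cos(θ₀)sin²(θ₀) dθ₀)^n. -/

import Mathlib

open Real Complex MeasureTheory

/-- The one-qubit error operator `W` of the paper. -/
noncomputable def Wmat (θ₀ θ₁ θ₂ : ℝ) : Matrix (Fin 2) (Fin 2) ℂ :=
  !![(Real.cos θ₀ : ℂ) + Complex.I * (Real.sin θ₀ * Real.cos θ₁ : ℝ),
     (-(Real.sin θ₀ * Real.sin θ₁ * Real.cos θ₂) : ℝ) +
       Complex.I * (Real.sin θ₀ * Real.sin θ₁ * Real.sin θ₂ : ℝ);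
     ((Real.sin θ₀ * Real.sin θ₁ * Real.cos θ₂) : ℝ) +
       Complex.I * (Real.sin θ₀ * Real.sin θ₁ * Real.sin θ₂ : ℝ),
     (Real.cos θ₀ : ℂ) - Complex.I * (Real.sin θ₀ * Real.cos θ₁ : ℝ)]

/-- The tensor (Kronecker) product `𝒲 = W₀ ⊗ ⋯ ⊗ W_{n-1}` acting on `(ℂ²)^{⊗ n}`,
realized as a matrix indexed by `Fin n → Fin 2`. -/
noncomputable def Wtens (n : ℕ) (θ₀ θ₁ θ₂ : Fin n → ℝ) :
    Matrix (Fin n → Fin 2) (Fin n → Fin 2) ℂ :=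
  fun j k => ∏ u : Fin n, Wmat (θ₀ u) (θ₁ u) (θ₂ u) (j u) (k u)

open scoped Matrix ComplexConjugate in
theorem Wmat_unit (a b c : ℝ) : (Wmat a b c)ᴴ * Wmat a b c = 1 := by
  have h1 := Complex.sin_sq_add_cos_sq (a : ℂ)
  have h2 := Complex.sin_sq_add_cos_sq (b : ℂ)
  have h3 := Complex.sin_sq_add_cos_sq (c : ℂ)
  have hI := Complex.I_sq
  ext i j
  fin_cases i <;> fin_cases j <;>
    simp [Wmat, Matrix.mul_apply, Fin.sum_univ_two, - Complex.ofReal_cos, - Complex.ofReal_sin,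
      Complex.conj_ofReal] <;>
    simp only [Complex.ofReal_cos, Complex.ofReal_sin] <;> grind

open scoped Matrix in
theorem Wtens_unit (n : ℕ) (a b c : Fin n → ℝ) : (Wtens n a b c)ᴴ * Wtens n a b c = 1 := by
  ext i k
  have key : ∀ u, ∑ x : Fin 2, star (Wmat (a u) (b u) (c u) x (i u)) * Wmat (a u) (b u) (c u) x (k u)
      = (1 : Matrix (Fin 2) (Fin 2) ℂ) (i u) (k u) := by
    intro u
    rw [← Wmat_unit (a u) (b u) (c u), Matrix.mul_apply]
    simp only [Matrix.conjTranspose_apply]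
  rw [Matrix.mul_apply]
  simp only [Matrix.conjTranspose_apply, Wtens, star_prod, ← Finset.prod_mul_distrib]
  rw [← Fintype.prod_sum (fun u x => star (Wmat (a u) (b u) (c u) x (i u)) * Wmat (a u) (b u) (c u) x (k u))]
  simp only [key, Matrix.one_apply]
  rw [Finset.prod_ite_zero]
  simp [funext_iff]

theorem norm_expand (n : ℕ) (a b c : Fin n → ℝ) (Φ : EuclideanSpace ℂ (Fin n → Fin 2))
    (hΦ : ‖Φ‖ = 1) :
    ‖Matrix.toEuclideanLin (Wtens n a b c) Φ - Φ‖ ^ 2 =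
      2 - 2 * (∑ J : (Fin n → Fin 2) × (Fin n → Fin 2), (star (Φ J.1) * Φ J.2) *
        ∏ u, Wmat (a u) (b u) (c u) (J.1 u) (J.2 u)).re := by
  have h1 : ‖Matrix.toEuclideanLin (Wtens n a b c) Φ‖ ^ 2 = 1 := by
    rw [@norm_sq_eq_re_inner ℂ, ← LinearMap.adjoint_inner_left,
      ← Matrix.toEuclideanLin_conjTranspose_eq_adjoint, ← LinearMap.comp_apply]
    have : Matrix.toEuclideanLin (Wtens n a b c).conjTranspose ∘ₗ Matrix.toEuclideanLin (Wtens n a b c)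
        = LinearMap.id := by
      ext1 x
      simp [Matrix.toEuclideanLin, Matrix.toLpLin_apply, Matrix.mulVec_mulVec, Wtens_unit]
    rw [this, LinearMap.id_apply, ← @norm_sq_eq_re_inner ℂ, hΦ]; norm_num
  rw [norm_sub_rev, @norm_sub_sq ℂ, h1, hΦ]
  have : inner ℂ Φ (Matrix.toEuclideanLin (Wtens n a b c) Φ) =
      (∑ J : (Fin n → Fin 2) × (Fin n → Fin 2), (star (Φ J.1) * Φ J.2) *
        ∏ u, Wmat (a u) (b u) (c u) (J.1 u) (J.2 u)) := by
    rw [Fintype.sum_prod_type, PiLp.inner_apply]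
    refine Finset.sum_congr rfl fun j _ => ?_
    simp only [Matrix.toEuclideanLin, Matrix.toLpLin_apply, RCLike.inner_apply, Matrix.mulVec, dotProduct, Finset.sum_mul, Wtens]
    refine Finset.sum_congr rfl fun k _ => ?_
    simp only [RCLike.star_def]
    ring
  rw [this]
  simp only [RCLike.re_to_complex]
  ring

theorem integral_step {n : ℕ} {ι : Type*} [Fintype ι] (s : Set ℝ)
    (g : Fin n → ℝ → ℝ) (c : ι → ℂ) (h : ι → Fin n → ℝ → ℂ)
    (hg : ∀ u, IntegrableOn (g u) s) (hh : ∀ J u, IntegrableOn (h J u) s) :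
    ∫ θ in Set.pi Set.univ (fun _ : Fin n => s),
      (2 * ∏ u, g u (θ u) - 2 * (∑ J, c J * ∏ u, h J u (θ u)).re) =
    2 * ∏ u, (∫ t in s, g u t) - 2 * (∑ J, c J * ∏ u, ∫ t in s, h J u t).re := by
  rw [volume_pi, Measure.restrict_pi_pi]
  have i1 : Integrable (fun θ : Fin n → ℝ => ∏ u, g u (θ u))
      (Measure.pi fun _ => volume.restrict s) := Integrable.fintype_prod hg
  have i2 : ∀ J, Integrable (fun θ : Fin n → ℝ => c J * ∏ u, h J u (θ u))
      (Measure.pi fun _ => volume.restrict s) :=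
    fun J => (Integrable.fintype_prod (hh J)).const_mul _
  have i3 := integrable_finsetSum Finset.univ (fun J _ => i2 J)
  have i4 : Integrable (fun θ : Fin n → ℝ => (∑ J, c J * ∏ u, h J u (θ u)).re)
      (Measure.pi fun _ => volume.restrict s) := i3.re
  rw [integral_sub (i1.const_mul 2) (i4.const_mul 2), integral_const_mul, integral_const_mul,
    integral_fintype_prod_eq_prod]
  have := integral_re i3
  simp only [RCLike.re_to_complex] at this
  rw [this, integral_finsetSum _ (fun J _ => i2 J)]
  simp only [integral_const_mul]
  congr 3
  refine Finset.sum_congr rfl fun J _ => ?_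
  rw [integral_fintype_prod_eq_prod]

/-- `W` integrated over the last angle, normalized. -/
noncomputable def Dmat (θ₀ θ₁ : ℝ) (i j : Fin 2) : ℂ :=
  if i = j then (Real.cos θ₀ : ℂ) + (if i = 0 then 1 else -1) * Complex.I * ((Real.sin θ₀ : ℂ) * (Real.cos θ₁ : ℂ))
  else 0

theorem Wmat_cont (a b : ℝ) (i j : Fin 2) : Continuous fun t => Wmat a b t i j := by
  fin_cases i <;> fin_cases j <;> simp [Wmat] <;> fun_prop

theorem int2 (a b : ℝ) (i j : Fin 2) :
    ∫ t in Set.Ico (0:ℝ) (2 * π), Wmat a b t i j = 2 * π * Dmat a b i j := by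
  have hp := Real.pi_pos
  rw [integral_Ico_eq_integral_Ioc, ← intervalIntegral.integral_of_le (by positivity)]
  have hc : ∫ t in (0:ℝ)..(2*π), ((Real.cos t : ℝ) : ℂ) = 0 := by
    rw [intervalIntegral.integral_ofReal]; simp
  have hs : ∫ t in (0:ℝ)..(2*π), ((Real.sin t : ℝ) : ℂ) = 0 := by
    rw [intervalIntegral.integral_ofReal]; simp
  have gen : ∀ p q : ℂ, ∫ t in (0:ℝ)..(2*π), (p * ((Real.cos t : ℝ) : ℂ) + q * ((Real.sin t : ℝ) : ℂ)) = 0 := by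
    intro p q
    rw [intervalIntegral.integral_add, intervalIntegral.integral_const_mul,
      intervalIntegral.integral_const_mul, hc, hs]
    · simp
    all_goals exact Continuous.intervalIntegrable (by fun_prop) _ _
  fin_cases i <;> fin_cases j
  · simp [Wmat, Dmat]; ring
  · simp only [Dmat]
    simp
    rw [← gen (-(Real.sin a * Real.sin b)) (Complex.I * (Real.sin a * Real.sin b))]
    congr 1; ext t; simp [Wmat]; ring
  · simp only [Dmat]
    simp
    rw [← gen ((Real.sin a * Real.sin b)) (Complex.I * (Real.sin a * Real.sin b))]
    congr 1; ext t; simp [Wmat]; ring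
  · simp [Wmat, Dmat]; ring

theorem int1s : ∫ t in Set.Icc (0:ℝ) π, Real.sin t = 2 := by
  rw [integral_Icc_eq_integral_Ioc, ← intervalIntegral.integral_of_le Real.pi_pos.le]
  simp; norm_num

theorem int1 (a : ℝ) (i j : Fin 2) :
    ∫ t in Set.Icc (0:ℝ) π, (Real.sin t : ℂ) * Dmat a t i j = if i = j then 2 * (Real.cos a : ℂ) else 0 := by
  by_cases h : i = j
  · simp only [Dmat, h, if_true]
    rw [integral_Icc_eq_integral_Ioc, ← intervalIntegral.integral_of_le Real.pi_pos.le]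
    have e : ∀ t : ℝ, (Real.sin t : ℂ) * ((Real.cos a : ℂ) + (if j = 0 then 1 else -1) * Complex.I * ((Real.sin a : ℂ) * (Real.cos t : ℂ)))
      = (Real.cos a : ℂ) * ((Real.sin t : ℝ) : ℂ) + ((if j = 0 then 1 else -1) * Complex.I * (Real.sin a : ℂ)) * ((Real.sin t * Real.cos t : ℝ) : ℂ) := by
      intro t; push_cast; ring
    simp only [e]
    rw [intervalIntegral.integral_add, intervalIntegral.integral_const_mul,
      intervalIntegral.integral_const_mul, intervalIntegral.integral_ofReal, intervalIntegral.integral_ofReal,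
      integral_sin, integral_sin_mul_cos₁]
    · simp; ring
    all_goals exact Continuous.intervalIntegrable (by fun_prop) _ _
  · simp [Dmat, h]

theorem Dmat_cont (a : ℝ) (i j : Fin 2) : Continuous fun t => Dmat a t i j := by
  unfold Dmat
  by_cases h : i = j
  · simp only [h, if_true]; fun_prop
  · simp only [h, if_false]; fun_prop

theorem variance_n_qubit_independent_error (n : ℕ) (f : ℝ → ℝ)
    (hf : 4 * π * ∫ θ in (0:ℝ)..π, f θ * Real.sin θ ^ 2 = 1)
    (Φ : EuclideanSpace ℂ (Fin n → Fin 2)) (hΦ : ‖Φ‖ = 1) :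
    (∫ θ₀ in Set.pi Set.univ (fun _ : Fin n => Set.Icc (0:ℝ) π),
      ∫ θ₁ in Set.pi Set.univ (fun _ : Fin n => Set.Icc (0:ℝ) π),
        ∫ θ₂ in Set.pi Set.univ (fun _ : Fin n => Set.Ico (0:ℝ) (2 * π)),
          (∏ u : Fin n, f (θ₀ u)) *
            ‖Matrix.toEuclideanLin (Wtens n θ₀ θ₁ θ₂) Φ - Φ‖ ^ 2 *
              ∏ u : Fin n, (Real.sin (θ₀ u) ^ 2 * Real.sin (θ₁ u))) =
      2 - 2 * (4 * π * ∫ θ in (0:ℝ)..π, f θ * Real.cos θ * Real.sin θ ^ 2) ^ n := by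
  have hp := Real.pi_pos
  -- level 2
  have L2 : ∀ a b : Fin n → ℝ, (∫ θ₂ in Set.pi Set.univ (fun _ : Fin n => Set.Ico (0:ℝ) (2 * π)),
          (∏ u : Fin n, f (a u)) *
            ‖Matrix.toEuclideanLin (Wtens n a b θ₂) Φ - Φ‖ ^ 2 *
              ∏ u : Fin n, (Real.sin (a u) ^ 2 * Real.sin (b u))) =
      2 * ∏ u, (f (a u) * Real.sin (a u) ^ 2 * (2 * π)) * Real.sin (b u) -
      2 * (∑ J : (Fin n → Fin 2) × (Fin n → Fin 2), (star (Φ J.1) * Φ J.2) *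
        ∏ u, ((f (a u) * Real.sin (a u) ^ 2 * (2 * π) : ℝ) : ℂ) *
          ((Real.sin (b u) : ℂ) * Dmat (a u) (b u) (J.1 u) (J.2 u))).re := by
    intro a b
    have := integral_step (n := n) (Set.Ico (0:ℝ) (2 * π))
      (fun u _ => f (a u) * Real.sin (a u) ^ 2 * Real.sin (b u))
      (fun J : (Fin n → Fin 2) × (Fin n → Fin 2) => star (Φ J.1) * Φ J.2)
      (fun J u t => ((f (a u) * Real.sin (a u) ^ 2 * Real.sin (b u) : ℝ) : ℂ) *
        Wmat (a u) (b u) t (J.1 u) (J.2 u))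
      (fun u => (Continuous.integrableOn_Icc (by fun_prop)).mono_set Set.Ico_subset_Icc_self)
      (fun J u => (Continuous.integrableOn_Icc (continuous_const.mul (Wmat_cont _ _ _ _))).mono_set
        Set.Ico_subset_Icc_self)
    convert this using 1
    · refine integral_congr_ae (Filter.Eventually.of_forall fun c => ?_)
      simp only [norm_expand n a b c Φ hΦ, Finset.prod_mul_distrib]
      have hm : ∀ (x : ℝ) (y z : ℂ), y * ((x : ℂ) * z) = (x : ℂ) * (y * z) :=
        fun x y z => mul_left_comm _ _ _
      simp only [← Complex.ofReal_prod, hm, ← Finset.mul_sum, Complex.re_ofReal_mul]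
      simp only [Finset.prod_mul_distrib]
      ring
    · congr 1
      · congr 1
        refine Finset.prod_congr rfl fun u _ => ?_
        simp [hp.le]; ring
      · congr 2
        refine Finset.sum_congr rfl fun J _ => ?_
        congr 1
        refine Finset.prod_congr rfl fun u _ => ?_
        rw [integral_const_mul, int2]
        push_cast; ring
  -- level 1
  have L1 : ∀ a : Fin n → ℝ, (∫ b in Set.pi Set.univ (fun _ : Fin n => Set.Icc (0:ℝ) π),
      (2 * ∏ u, (f (a u) * Real.sin (a u) ^ 2 * (2 * π)) * Real.sin (b u) -
      2 * (∑ J : (Fin n → Fin 2) × (Fin n → Fin 2), (star (Φ J.1) * Φ J.2) *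
        ∏ u, ((f (a u) * Real.sin (a u) ^ 2 * (2 * π) : ℝ) : ℂ) *
          ((Real.sin (b u) : ℂ) * Dmat (a u) (b u) (J.1 u) (J.2 u))).re)) =
      2 * ∏ u, (4 * π * (f (a u) * Real.sin (a u) ^ 2)) -
      2 * (∑ J : (Fin n → Fin 2) × (Fin n → Fin 2), (star (Φ J.1) * Φ J.2) *
        ∏ u, ((if J.1 u = J.2 u then 1 else 0 : ℂ) * 
          ((4 * π * (f (a u) * Real.cos (a u) * Real.sin (a u) ^ 2) : ℝ) : ℂ))).re := by
    intro a
    rw [integral_step (n := n) (Set.Icc (0:ℝ) π)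
      (fun u t => (f (a u) * Real.sin (a u) ^ 2 * (2 * π)) * Real.sin t)
      (fun J : (Fin n → Fin 2) × (Fin n → Fin 2) => star (Φ J.1) * Φ J.2)
      (fun J u t => ((f (a u) * Real.sin (a u) ^ 2 * (2 * π) : ℝ) : ℂ) *
          ((Real.sin t : ℂ) * Dmat (a u) t (J.1 u) (J.2 u)))
      (fun u => Continuous.integrableOn_Icc (by fun_prop))
      (fun J u => Continuous.integrableOn_Icc (by have := Dmat_cont (a u) (J.1 u) (J.2 u); fun_prop))]
    congr 1
    · congr 1
      refine Finset.prod_congr rfl fun u _ => ?_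
      rw [integral_const_mul, int1s]; ring
    · congr 2
      refine Finset.sum_congr rfl fun J _ => ?_
      congr 1
      refine Finset.prod_congr rfl fun u _ => ?_
      rw [integral_const_mul, int1]
      split_ifs <;> push_cast <;> ring
  simp only [L2, L1]
  have hint : IntervalIntegrable (fun θ => f θ * Real.sin θ ^ 2) volume 0 π := by
    by_contra hcon
    rw [intervalIntegral.integral_undef hcon] at hf
    simp at hf
  have hint2 : IntervalIntegrable (fun θ => f θ * Real.cos θ * Real.sin θ ^ 2) volume 0 π := by
    have := hint.mul_continuousOn (g := Real.cos) (by fun_prop)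
    refine this.congr (fun t _ => ?_)
    ring
  rw [intervalIntegrable_iff_integrableOn_Icc_of_le hp.le] at hint hint2
  have hint3 : Integrable (fun t => ((4 * π * (f t * Real.cos t * Real.sin t ^ 2) : ℝ) : ℂ))
      (volume.restrict (Set.Icc (0:ℝ) π)) :=
    Integrable.ofReal (𝕜 := ℂ) (hint2.const_mul (4 * π))
  rw [integral_step (n := n) (Set.Icc (0:ℝ) π)
      (fun u t => 4 * π * (f t * Real.sin t ^ 2))
      (fun J : (Fin n → Fin 2) × (Fin n → Fin 2) => star (Φ J.1) * Φ J.2)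
      (fun J u t => (if J.1 u = J.2 u then 1 else 0 : ℂ) * 
          ((4 * π * (f t * Real.cos t * Real.sin t ^ 2) : ℝ) : ℂ))
      (fun u => hint.const_mul _)
      (fun J u => Integrable.const_mul hint3 _)]
  have e1 : ∫ t in Set.Icc (0:ℝ) π, 4 * π * (f t * Real.sin t ^ 2) = 1 := by
    rw [integral_const_mul, integral_Icc_eq_integral_Ioc, ← intervalIntegral.integral_of_le hp.le, hf]
  set C := 4 * π * ∫ θ in (0:ℝ)..π, f θ * Real.cos θ * Real.sin θ ^ 2 with hC
  have e2 : ∀ z : ℂ, ∫ t in Set.Icc (0:ℝ) π, z * ((4 * π * (f t * Real.cos t * Real.sin t ^ 2) : ℝ) : ℂ)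
      = z * (C : ℂ) := by
    intro z
    rw [integral_const_mul, integral_complex_ofReal, integral_const_mul, integral_Icc_eq_integral_Ioc,
      ← intervalIntegral.integral_of_le hp.le]
  simp only [e1, e2]
  have e3 : ∑ J : (Fin n → Fin 2) × (Fin n → Fin 2), (star (Φ J.1) * Φ J.2) *
        ∏ u, ((if J.1 u = J.2 u then 1 else 0 : ℂ) * (C : ℂ)) = ((C ^ n : ℝ) : ℂ) := by
    rw [Fintype.sum_prod_type]
    have : ∀ j k : Fin n → Fin 2, ∏ u, ((if j u = k u then 1 else 0 : ℂ) * (C : ℂ)) =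
        if j = k then (C : ℂ) ^ n else 0 := by
      intro j k
      rw [Finset.prod_mul_distrib, Finset.prod_ite_zero]
      simp [funext_iff]
    simp only [this, mul_ite, mul_zero, Finset.sum_ite_eq, Finset.mem_univ, if_true]
    rw [← Finset.sum_mul]
    have h1 : ∑ j, star (Φ j) * Φ j = 1 := by
      have h := inner_self_eq_norm_sq_to_K (𝕜 := ℂ) Φ
      rw [hΦ, PiLp.inner_apply] at h
      simp only [RCLike.inner_apply, mul_comm] at h
      simpa [mul_comm] using h
    rw [h1]; simp
  rw [e3, Complex.ofReal_re]
  simp
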